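/- Let ω : [0,∞) → ℝ be a càdlàg function with ω(0) = 0, and let ω̄(t) := sup{ω(s) : s ∈ [0,t]} be its running supremum. If ω̄ is not continuous on [0,∞), then there exists x > 0 such that T_x(ω) < ∞ and ω(T_x(ω)) > x. -/

import Mathlib

open MeasureTheory ProbabilityTheory Filter Set
open scoped ENNReal Topology

/-- Left limit of a path at time `t`, with the convention `f(0-) := f(0)`
(and junk `f t` for `t < 0`). -/
noncomputable def leftLimAt (f : ℝ → ℝ) (t : ℝ) : ℝ :=
  if 0 < t then Function.leftLim f t else f t

/-- A path `f : [0,∞) → ℝ` is càdlàg: right-continuous on `[0,∞)`,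
with left limits on `(0,∞)`. -/
def IsCadlag (f : ℝ → ℝ) : Prop :=
  (∀ t : ℝ, 0 ≤ t → ContinuousWithinAt f (Set.Ici t) t) ∧
  (∀ t : ℝ, 0 < t → ∃ l : ℝ, Filter.Tendsto f (nhdsWithin t (Set.Iio t)) (nhds l))

/-!
The running supremum is monotone and inherits right-continuity from the path, so a discontinuity at
`t` is a jump from the left. The running supremum only sees the past, hence `ω` stays below some
level `y` on `[0, t)` while `ω t > y`. Every `x` strictly between `y` and `ω t` is then
first reached at time `t`, and overshot there.
-/

theorem bddAbove_image_of_forall_isBoundedUnder {X β : Type*} [TopologicalSpace X]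
    [Preorder β] [IsDirectedOrder β] [Nonempty β] {f : X → β} {K : Set X} (hK : IsCompact K)
    (hf : ∀ x ∈ K, (𝓝[K] x).IsBoundedUnder (· ≤ ·) f) : BddAbove (f '' K) := by
  refine hK.induction_on (p := fun s => BddAbove (f '' s)) (by simp)
    (fun s u hsu hu => hu.mono (image_mono hsu))
    (fun s u hs hu => by simpa only [image_union] using hs.union hu) fun x hx => ?_
  obtain ⟨C, hC⟩ := hf x hx
  exact ⟨{y | f y ≤ C}, hC, C, forall_mem_image.2 fun _ => id⟩

theorem IsCadlag.bddAbove_image_Icc {f : ℝ → ℝ} (hf : IsCadlag f) (t : ℝ) :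
    BddAbove (f '' Icc 0 t) := by
  refine bddAbove_image_of_forall_isBoundedUnder isCompact_Icc fun s hs => ?_
  have hright : (𝓝[≥] s).IsBoundedUnder (· ≤ ·) f := (hf.1 s hs.1).isBoundedUnder_le
  rcases hs.1.eq_or_lt with rfl | hs_pos
  · exact hright.mono (nhdsWithin_mono 0 Icc_subset_Ici_self)
  · obtain ⟨l, hl⟩ := hf.2 s hs_pos
    have hnhds : (𝓝 s).IsBoundedUnder (· ≤ ·) f := by
      rw [← nhdsLT_sup_nhdsGE, IsBoundedUnder, map_sup]
      exact isBounded_sup hl.isBoundedUnder_le hright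
    exact hnhds.mono nhdsWithin_le_nhds

theorem isLeast_setOf_le_of_forall_Ico_lt {α β : Type*} [LinearOrder α] [Preorder β]
    {f : α → β} {a t : α} {x : β} (hat : a ≤ t) (hxt : x ≤ f t)
    (hlt : ∀ s ∈ Ico a t, f s < x) : IsLeast {s | a ≤ s ∧ x ≤ f s} t :=
  ⟨⟨hat, hxt⟩, fun _ ⟨has, hxs⟩ => not_lt.1 fun hst => (hlt _ ⟨has, hst⟩).not_ge hxs⟩

theorem exists_lt_forall_Ico_le_of_monotoneOn_of_not_continuousWithinAt
    {α β : Type*} [LinearOrder α] [TopologicalSpace α] [OrderTopology α]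
    [LinearOrder β] [TopologicalSpace β] [OrderTopology β] {f : α → β} {a t : α}
    (hf : MonotoneOn f (Icc a t)) (h : ¬ ContinuousWithinAt f (Ico a t) t) :
    ∃ y < f t, ∀ s ∈ Ico a t, f s ≤ y := by
  contrapose! h
  refine tendsto_order.2 ⟨fun y hy => ?_, fun y hy => ?_⟩
  · obtain ⟨s, hs, hys⟩ := h y hy
    filter_upwards [self_mem_nhdsWithin, mem_nhdsWithin_of_mem_nhds (Ioi_mem_nhds hs.2)]
      with u hu hsu
    exact hys.trans_le (hf (Ico_subset_Icc_self hs) (Ico_subset_Icc_self hu) (le_of_lt hsu))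
  · filter_upwards [self_mem_nhdsWithin] with u hu
    exact (hf (Ico_subset_Icc_self hu) ⟨hu.1.trans hu.2.le, le_rfl⟩ hu.2.le).trans_lt hy

section Preorder

variable {α β : Type*} [Preorder α] [ConditionallyCompleteLattice β]
  {f : α → β} {a s t : α}

/-- The running supremum `t ↦ sup {f s | s ∈ [a, t]}` of `f` started at time `a`. It is meaningful
for `a ≤ t` and `f` bounded above on `[a, t]`; otherwise `sSup` takes a junk value. -/
noncomputable def runSup (f : α → β) (a t : α) : β :=
  sSup (f '' Icc a t)

theorem le_runSup (hf : BddAbove (f '' Icc a t)) (hs : s ∈ Icc a t) : f s ≤ runSup f a t :=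
  le_csSup hf (mem_image_of_mem f hs)

theorem runSup_le {y : β} (hat : a ≤ t) (hy : ∀ s ∈ Icc a t, f s ≤ y) : runSup f a t ≤ y :=
  csSup_le ((nonempty_Icc.2 hat).image f) (forall_mem_image.2 hy)

theorem monotoneOn_runSup (hf : ∀ t, BddAbove (f '' Icc a t)) :
    MonotoneOn (runSup f a) (Ici a) :=
  fun _ hs t _ hst => runSup_le hs fun _ hr => le_runSup (hf t) ⟨hr.1, hr.2.trans hst⟩

end Preorder

section OrderTopology

variable {α β : Type*} [LinearOrder α] [TopologicalSpace α] [OrderTopology α]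
  [ConditionallyCompleteLinearOrder β] [TopologicalSpace β] [OrderTopology β]
  {f : α → β} {a t : α}

theorem continuousWithinAt_Ici_runSup [DenselyOrdered β] (hbdd : ∀ t, BddAbove (f '' Icc a t))
    (hat : a ≤ t) (hf : UpperSemicontinuousWithinAt f (Ici t) t) :
    ContinuousWithinAt (runSup f a) (Ici t) t := by
  refine tendsto_order.2 ⟨fun y hy => ?_, fun y hy => ?_⟩
  · filter_upwards [self_mem_nhdsWithin] with s hts
    exact hy.trans_le (monotoneOn_runSup hbdd hat (hat.trans hts) hts)
  · obtain ⟨z, htz, hzy⟩ := exists_between hy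
    have hlt : ∀ᶠ r in 𝓝[≥] t, f r < z :=
      hf z ((le_runSup (hbdd t) (right_mem_Icc.2 hat)).trans_lt htz)
    have hIcc : Tendsto (fun s => Icc t s) (𝓝[≥] t) (𝓝[≥] t).smallSets :=
      (tendsto_const_nhdsWithin self_mem_Ici).Icc tendsto_id
    filter_upwards [hIcc (eventually_smallSets_forall.2 hlt), self_mem_nhdsWithin] with s hs hts
    refine (runSup_le (hat.trans hts) fun r hr => ?_).trans_lt hzy
    rcases le_total r t with hrt | htr
    · exact (le_runSup (hbdd t) ⟨hr.1, hrt⟩).trans htz.le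
    · exact (hs r ⟨htr, hr.2⟩).le

theorem exists_lt_forall_Ico_le_of_not_continuousWithinAt_runSup
    (hbdd : ∀ t, BddAbove (f '' Icc a t)) (hat : a ≤ t)
    (h : ¬ ContinuousWithinAt (runSup f a) (Ico a t) t) :
    ∃ y < f t, ∀ s ∈ Ico a t, f s ≤ y := by
  obtain ⟨y, hyt, hy⟩ := exists_lt_forall_Ico_le_of_monotoneOn_of_not_continuousWithinAt
    ((monotoneOn_runSup hbdd).mono Icc_subset_Ici_self) h
  have hfy : ∀ s ∈ Ico a t, f s ≤ y := fun s hs =>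
    (le_runSup (hbdd s) (right_mem_Icc.2 hs.1)).trans (hy s hs)
  refine ⟨y, lt_of_not_ge fun hty => hyt.not_ge (runSup_le hat fun s hs => ?_), hfy⟩
  rcases hs.2.eq_or_lt with rfl | hst
  · exact hty
  · exact hfy s ⟨hs.1, hst⟩

theorem exists_overshoot_of_not_continuous_runSup_general [DenselyOrdered β]
    (hf : ∀ t, a ≤ t → UpperSemicontinuousWithinAt f (Ici t) t)
    (hbdd : ∀ t, BddAbove (f '' Icc a t)) (h : ¬ ContinuousOn (runSup f a) (Ici a)) :
    ∃ x t, f a < x ∧ IsLeast {s | a ≤ s ∧ x ≤ f s} t ∧ x < f t := by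
  obtain ⟨t, hat, ht⟩ : ∃ t, a ≤ t ∧ ¬ ContinuousWithinAt (runSup f a) (Ici a) t := by
    simpa [ContinuousOn] using h
  have hleft : ¬ ContinuousWithinAt (runSup f a) (Ico a t) t := fun hleft =>
    ht (Ico_union_Ici_eq_Ici hat ▸ hleft.union (continuousWithinAt_Ici_runSup hbdd hat (hf t hat)))
  have hat' : a < t := hat.lt_of_ne (by rintro rfl; simp [ContinuousWithinAt] at hleft)
  obtain ⟨y, hyt, hy⟩ := exists_lt_forall_Ico_le_of_not_continuousWithinAt_runSup hbdd hat hleft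
  obtain ⟨x, hyx, hxt⟩ := exists_between hyt
  have hlt : ∀ s ∈ Ico a t, f s < x := fun s hs => (hy s hs).trans_lt hyx
  exact ⟨x, t, hlt a (left_mem_Ico.2 hat'), isLeast_setOf_le_of_forall_Ico_lt hat hxt.le hlt, hxt⟩

end OrderTopology

/-- If the running supremum of a càdlàg path started at `0` is not continuous on
`[0,∞)`, then the path strictly overshoots some level `x > 0` at its first passage. -/
theorem exists_overshoot_of_not_continuous_runSup (ω : ℝ → ℝ) (hω : IsCadlag ω)
    (h0 : ω 0 = 0)
    (h : ¬ ContinuousOn (fun t => sSup (ω '' Set.Icc 0 t)) (Set.Ici (0 : ℝ))) :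
    ∃ x : ℝ, 0 < x ∧ {t : ℝ | 0 ≤ t ∧ x ≤ ω t}.Nonempty ∧
      ω (sInf {t : ℝ | 0 ≤ t ∧ x ≤ ω t}) > x := by
  obtain ⟨x, t, hx, ht, hxt⟩ := exists_overshoot_of_not_continuous_runSup_general
    (fun t ht => (hω.1 t ht).upperSemicontinuousWithinAt) hω.bddAbove_image_Icc h
  exact ⟨x, h0 ▸ hx, ht.nonempty, ht.csInf_eq.symm ▸ hxt⟩
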